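/- Let t0 < t1, α ∈ (0,1) and r ∈ (1/(1−α), ∞). Then there exists a nonnegative f ∈ L^1(t0,t1;ℝ) such that J^α f (which is defined almost everywhere on (t0,t1)) does NOT belong to weak-L^r(t0,t1;ℝ): sup_{λ>0} λ^r · μ{t ∈ (t0,t1) : J^α f(t) > λ} = ∞. In particular J^α(L^1(t0,t1;ℝ)) ⊄ L^r_w(t0,t1;ℝ). -/

import Mathlib

open MeasureTheory Set

/-- The Riemann–Liouville fractional integral of order `α` at `t0`:
`J^α f(t) = (1/Γ(α)) ∫_{t0}^{t} (t−s)^{α−1} f(s) ds`, with the conventions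
`J^0 f = f` and (since the interval integral from `t0` to `t0` vanishes)
`J^α f(t0) = 0`. -/
noncomputable def RL {X : Type*} [NormedAddCommGroup X] [NormedSpace ℝ X] (t0 α : ℝ)
    (f : ℝ → X) (t : ℝ) : X :=
  if α = 0 then f t
  else (1 / Real.Gamma α) • ∫ s in t0..t, (t - s) ^ (α - 1) • f s

/-!
The witness is a power `f s = (s - t0) ^ (β - 1)` with `0 < β < 1 - α - 1 / r`. It is integrable
since `β > 0`, and by Euler's Beta integral `J^α f` is a positive multiple of
`(t - t0) ^ (α + β - 1)`. The exponent `p = α + β - 1` satisfies `p < -1 / r`, so on `(t0, t0 + δ)`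
the function `J^α f` exceeds a level `λ` proportional to `δ ^ p`, and `λ ^ r * δ` is proportional
to `δ ^ (p * r + 1)`, which blows up as `δ → 0`.

The base is written `|s - t0|` because `Real.rpow` can be negative at a negative base, while the
witness must be nonnegative on all of `ℝ`.
-/

open Filter Topology

theorem integral_rpow_mul_sub_rpow {a b x : ℝ} (ha : 0 < a) (hb : 0 < b) (hx : 0 < x) :
    ∫ s in 0..x, s ^ (a - 1) * (x - s) ^ (b - 1) =
      x ^ (a + b - 1) * ProbabilityTheory.beta a b := by
  have cast_integrand : ∀ s ∈ uIcc 0 x, ((s ^ (a - 1) * (x - s) ^ (b - 1) : ℝ) : ℂ) =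
      (s : ℂ) ^ ((a : ℂ) - 1) * ((x : ℂ) - s) ^ ((b : ℂ) - 1) := by
    intro s hs
    rw [uIcc_of_le hx.le] at hs
    push_cast [Complex.ofReal_cpow hs.1, Complex.ofReal_cpow (sub_nonneg.2 hs.2)]
    rfl
  calc ∫ s in 0..x, s ^ (a - 1) * (x - s) ^ (b - 1)
      = (∫ s in 0..x, (s : ℂ) ^ ((a : ℂ) - 1) * ((x : ℂ) - s) ^ ((b : ℂ) - 1)).re := by
        rw [← intervalIntegral.integral_congr cast_integrand, intervalIntegral.integral_ofReal,
          Complex.ofReal_re]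
    _ = ((x ^ (a + b - 1) : ℝ) * Complex.betaIntegral a b).re := by
        rw [Complex.betaIntegral_scaled _ _ hx, Complex.ofReal_cpow hx.le]
        push_cast
        rfl
    _ = x ^ (a + b - 1) * ProbabilityTheory.beta a b := by
        rw [Complex.re_ofReal_mul, ProbabilityTheory.beta_eq_betaIntegralReal a b ha hb]

theorem RL_abs_sub_rpow {t0 t α β : ℝ} (hα : 0 < α) (hβ : 0 < β) (ht : t0 < t) :
    RL t0 α (fun s => |s - t0| ^ (β - 1)) t =
      Real.Gamma β / Real.Gamma (α + β) * (t - t0) ^ (α + β - 1) := by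
  have integral_eq : ∫ s in t0..t, (t - s) ^ (α - 1) • |s - t0| ^ (β - 1) =
      (t - t0) ^ (β + α - 1) * ProbabilityTheory.beta β α := by
    rw [← integral_rpow_mul_sub_rpow hβ hα (sub_pos.2 ht), ← sub_self t0,
      ← intervalIntegral.integral_comp_sub_right
        (fun u => u ^ (β - 1) * (t - t0 - u) ^ (α - 1)) t0]
    refine intervalIntegral.integral_congr fun s hs => ?_
    rw [uIcc_of_le ht.le] at hs
    simp only [smul_eq_mul, abs_of_nonneg (sub_nonneg.2 hs.1), sub_sub_sub_cancel_right, mul_comm]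
  have := (Real.Gamma_pos_of_pos hα).ne'
  rw [RL, if_neg hα.ne', integral_eq, ProbabilityTheory.beta, smul_eq_mul, add_comm β α]
  field_simp

theorem integrableOn_abs_sub_rpow {t0 t1 p : ℝ} (hp : -1 < p) :
    IntegrableOn (fun s => |s - t0| ^ p) (Ioc t0 t1) := by
  have shifted : IntegrableOn (fun s => (s - t0) ^ p) (Ioc t0 t1) := by
    simpa using ((intervalIntegral.intervalIntegrable_rpow' hp
      (a := 0) (b := t1 - t0)).comp_sub_right t0).1
  refine shifted.congr_fun (fun s hs => ?_) measurableSet_Ioc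
  simp only [abs_of_pos (sub_pos.2 hs.1)]

theorem le_volume_superlevel_of_rpow_le {g : ℝ → ℝ} {t0 t1 c p δ : ℝ} (hc : 0 < c) (hp : p < 0)
    (hδ : 0 ≤ δ) (hδt : t0 + δ ≤ t1) (hg : ∀ t ∈ Ioo t0 (t0 + δ), c * (t - t0) ^ p ≤ g t) :
    δ ≤ volume.real {t ∈ Ioo t0 t1 | c * δ ^ p < g t} := by
  have subset_superlevel : Ioo t0 (t0 + δ) ⊆ {t ∈ Ioo t0 t1 | c * δ ^ p < g t} := by
    intro t ht
    refine ⟨⟨ht.1, ht.2.trans_le hδt⟩, lt_of_lt_of_le ?_ (hg t ht)⟩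
    exact mul_lt_mul_of_pos_left
      (Real.rpow_lt_rpow_of_neg (sub_pos.2 ht.1) (sub_lt_iff_lt_add'.2 ht.2) hp) hc
  calc δ = volume.real (Ioo t0 (t0 + δ)) := by simp [hδ]
    _ ≤ volume.real {t ∈ Ioo t0 t1 | c * δ ^ p < g t} :=
        measureReal_mono subset_superlevel
          (measure_ne_top_of_subset (sep_subset _ _) measure_Ioo_lt_top.ne)

theorem exists_lt_rpow_mul_volume_superlevel {g : ℝ → ℝ} {t0 t1 c p r : ℝ} (ht : t0 < t1)
    (hc : 0 < c) (hr : 0 < r) (hp : p * r < -1)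
    (hg : ∀ᶠ t in 𝓝[>] t0, c * (t - t0) ^ p ≤ g t) (C : ℝ) :
    ∃ lam : ℝ, 0 < lam ∧ C < lam ^ r * volume.real {t ∈ Ioo t0 t1 | lam < g t} := by
  obtain ⟨u, hu, hgu⟩ := mem_nhdsGT_iff_exists_Ioo_subset.1 hg
  have p_neg : p < 0 := by nlinarith
  have blow_up : Tendsto (fun δ : ℝ => c ^ r * δ ^ (p * r + 1)) (𝓝[>] 0) atTop :=
    (tendsto_rpow_neg_nhdsGT_zero (by linarith)).const_mul_atTop (by positivity)
  have small : ∀ᶠ δ : ℝ in 𝓝[>] 0, δ ∈ Ioo 0 (min u t1 - t0) :=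
    Ioo_mem_nhdsGT (sub_pos.2 (lt_min hu ht))
  obtain ⟨δ, hCδ, hδ, hδu⟩ := ((blow_up.eventually_gt_atTop C).and small).exists
  obtain ⟨hδu, hδt⟩ := lt_min_iff.1 (lt_sub_iff_add_lt'.1 hδu)
  refine ⟨c * δ ^ p, by positivity, ?_⟩
  calc C < c ^ r * δ ^ (p * r + 1) := hCδ
    _ = (c * δ ^ p) ^ r * δ := by
        rw [Real.mul_rpow hc.le (by positivity), ← Real.rpow_mul hδ.le, Real.rpow_add_one hδ.ne',
          mul_assoc]
    _ ≤ (c * δ ^ p) ^ r * volume.real {t ∈ Ioo t0 t1 | c * δ ^ p < g t} := by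
        gcongr
        exact le_volume_superlevel_of_rpow_le hc p_neg hδ.le hδt.le
          fun t ht => hgu ⟨ht.1, ht.2.trans hδu⟩

/-- For `t0 < t1`, `α ∈ (0,1)` and `r ∈ (1/(1−α), ∞)`, there exists a
nonnegative `f ∈ L^1(t0,t1;ℝ)` such that `J^α f` does NOT belong to
weak-`L^r(t0,t1;ℝ)`: `sup_{λ>0} λ^r μ{t ∈ (t0,t1) : J^α f(t) > λ} = ∞`. -/
theorem rl_l1_not_in_weak_lr (t0 t1 α r : ℝ) (ht : t0 < t1) (hα0 : 0 < α)
    (hα1 : α < 1) (hr : 1 / (1 - α) < r) :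
    ∃ f : ℝ → ℝ, (∀ t, 0 ≤ f t) ∧ IntegrableOn f (Ioc t0 t1) ∧
      ∀ C : ℝ, ∃ lam : ℝ, 0 < lam ∧
        C < lam ^ r * (volume {t ∈ Ioo t0 t1 | lam < RL t0 α f t}).toReal := by
  have one_sub_pos : 0 < 1 - α := sub_pos.2 hα1
  have r_pos : 0 < r := (one_div_pos.2 one_sub_pos).trans hr
  have exponent_room : 0 < 1 - α - 1 / r := sub_pos.2 ((one_div_lt one_sub_pos r_pos).1 hr)
  obtain ⟨β, hβ, hβr⟩ := exists_between exponent_room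
  have exponent_lt : (α + β - 1) * r < -1 :=
    (lt_div_iff₀ r_pos).1 (by rw [neg_div]; linarith)
  have Gamma_quotient_pos : 0 < Real.Gamma β / Real.Gamma (α + β) :=
    div_pos (Real.Gamma_pos_of_pos hβ) (Real.Gamma_pos_of_pos (add_pos hα0 hβ))
  refine ⟨fun s => |s - t0| ^ (β - 1), fun t => by positivity,
    integrableOn_abs_sub_rpow (by linarith), ?_⟩
  refine exists_lt_rpow_mul_volume_superlevel ht Gamma_quotient_pos r_pos exponent_lt ?_
  filter_upwards [self_mem_nhdsWithin] with t ht0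
  exact (RL_abs_sub_rpow hα0 hβ ht0).ge
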